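/- arXiv:2411.14561 — 3 statements merged into one kernel-verified Lean document; each statement's English description precedes it below -/
import Mathlib

section
/- Let p ≥ 2 be an integer. For every real polynomial u of degree at most p, the Gauss–Lobatto interpolant satisfies ∫_{−1}^{1} ((I_{p−1}u)'(x))² dx ≤ ∫_{−1}^{1} (u'(x))² dx. -/
open Polynomial

/-- The `n`-th Legendre polynomial, given by the Rodrigues formula
`P_n(x) = 1/(2^n n!) dⁿ/dxⁿ (x² − 1)ⁿ`, normalized so that `P_n(1) = 1`. -/
noncomputable def legendre (n : ℕ) : Polynomial ℝ :=
  Polynomial.C (1 / (2 ^ n * (n.factorial : ℝ))) *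
    (⇑(Polynomial.derivative (R := ℝ)))^[n] ((Polynomial.X ^ 2 - 1) ^ n)

/-- The polynomial `χ_p(x) = P_{p−1}'(x) (x² − 1)`, whose roots are the `p`
Gauss–Lobatto nodes. -/
noncomputable def lobattoChi (p : ℕ) : Polynomial ℝ :=
  Polynomial.derivative (legendre (p - 1)) * (Polynomial.X ^ 2 - 1)

/-!
Put `n = p - 1` and `w = (X² - 1)ⁿ`. Differentiating `(X² - 1) w' = 2 n X w` shows that `χ_p` is a
multiple of the `(n - 1)`-st derivative of `w`. By Rolle's theorem it splits over `ℝ`, and since it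
satisfies `(X² - 1) χ'' = n (n + 1) χ`, its roots are simple. Hence `u - I_{p-1} u`, which has
degree at most `p` and vanishes at the `p` nodes, is a multiple of `χ_p`, and `u' - (I_{p-1} u)'` is
a multiple of `χ_p' = n (n + 1) P_n`. As `P_n` is orthogonal to polynomials of degree less than `n`,
in particular to `(I_{p-1} u)'`, the Pythagorean theorem concludes.
-/

lemma exists_eq_C_mul_of_dvd_of_natDegree_le {R : Type*} [CommSemiring R] [NoZeroDivisors R]
    {f g : R[X]} (hfg : f ∣ g) (hdeg : g.natDegree ≤ f.natDegree) : ∃ a : R, g = C a * f := by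
  obtain ⟨r, rfl⟩ := hfg
  by_cases h0 : f * r = 0
  · exact ⟨0, by rw [h0, C_0, zero_mul]⟩
  have hr : r.natDegree = 0 := by
    rw [natDegree_mul (left_ne_zero_of_mul h0) (right_ne_zero_of_mul h0)] at hdeg
    omega
  exact ⟨r.coeff 0, by rw [← eq_C_of_natDegree_eq_zero hr, mul_comm]⟩

lemma dvd_of_splits_of_nodup_roots {K : Type*} [Field K] {f g : K[X]} (hf0 : f ≠ 0)
    (hf : f.Splits) (hnodup : f.roots.Nodup) (hroot : ∀ x, f.IsRoot x → g.IsRoot x) : f ∣ g := by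
  by_cases hg0 : g = 0
  · exact hg0 ▸ dvd_zero f
  refine hf.dvd_of_roots_le_roots hf0 ((Multiset.le_iff_subset hnodup).2 fun x hx => ?_)
  exact (mem_roots hg0).2 (hroot x (isRoot_of_mem_roots hx))

lemma nodup_roots_of_dvd_separable_mul_derivative_derivative {R : Type*} [CommRing R] [IsDomain R]
    [CharZero R] {s y : R[X]} (hs : s.Separable) (hdvd : y ∣ s * derivative (derivative y)) :
    y.roots.Nodup := by
  classical
  refine Multiset.nodup_iff_count_le_one.2 fun x => ?_
  rw [count_roots]
  by_contra! hmult
  have hy0 : y ≠ 0 := fun h => by simp [h] at hmult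
  obtain ⟨hroot, hroot'⟩ := (one_lt_rootMultiplicity_iff_isRoot hy0).1 hmult
  have hmult' : (derivative y).rootMultiplicity x = y.rootMultiplicity x - 1 :=
    derivative_rootMultiplicity_of_root hroot
  have hmult'' : (derivative (derivative y)).rootMultiplicity x = y.rootMultiplicity x - 2 := by
    rw [derivative_rootMultiplicity_of_root hroot', hmult', Nat.sub_sub]
  have hderiv_ne : derivative y ≠ 0 :=
    derivative_ne_zero.2 (natDegree_pos_iff_degree_pos.2 (degree_pos_of_root hy0 hroot)).ne'
  have hderiv2_ne : derivative (derivative y) ≠ 0 :=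
    derivative_ne_zero.2 (natDegree_pos_iff_degree_pos.2 (degree_pos_of_root hderiv_ne hroot')).ne'
  have hprod0 : s * derivative (derivative y) ≠ 0 := mul_ne_zero hs.ne_zero hderiv2_ne
  -- The product vanishes at `x` to order at most `1 + (m - 2) < m`, where `m` is the order of `y`.
  have hle := rootMultiplicity_le_rootMultiplicity_of_dvd hprod0 hdvd x
  rw [rootMultiplicity_mul hprod0, hmult''] at hle
  have hs1 := rootMultiplicity_le_one_of_separable hs x
  omega

lemma splits_iterate_derivative {f : ℝ[X]} (hf : f.Splits) (k : ℕ) :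
    (derivative^[k] f).Splits := by
  induction k with
  | zero => exact hf
  | succ k ih =>
    rw [Function.iterate_succ_apply', splits_iff_card_roots]
    have hrolle := card_roots_le_derivative (derivative^[k] f)
    have hcard := card_roots' (derivative (derivative^[k] f))
    rw [splits_iff_card_roots.1 ih] at hrolle
    rw [natDegree_derivative] at hcard ⊢
    omega

lemma natDegree_iterate_derivative_eq {R : Type*} [Semiring R] [IsAddTorsionFree R] (f : R[X])
    (k : ℕ) : (derivative^[k] f).natDegree = f.natDegree - k := by
  induction k with
  | zero => rfl
  | succ k ih => rw [Function.iterate_succ_apply', natDegree_derivative, ih, Nat.sub_sub]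

lemma integral_mul_iterate_derivative {a b : ℝ} {k : ℕ} {f : ℝ[X]}
    (ha : ∀ j < k, (derivative^[j] f).IsRoot a) (hb : ∀ j < k, (derivative^[j] f).IsRoot b)
    (q : ℝ[X]) :
    ∫ x in a..b, q.eval x * (derivative^[k] f).eval x =
      (-1) ^ k * ∫ x in a..b, (derivative^[k] q).eval x * f.eval x := by
  induction k generalizing q with
  | zero => simp
  | succ k ih =>
    have hparts := intervalIntegral.integral_mul_deriv_eq_deriv_mul
      (fun x _ => q.hasDerivAt x) (fun x _ => (derivative^[k] f).hasDerivAt x)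
      ((derivative q).continuous.intervalIntegrable a b)
      ((derivative (derivative^[k] f)).continuous.intervalIntegrable a b)
    rw [(ha k k.lt_succ_self).eq_zero, (hb k k.lt_succ_self).eq_zero,
      ih (fun j hj => ha j (hj.trans k.lt_succ_self))
        (fun j hj => hb j (hj.trans k.lt_succ_self))] at hparts
    rw [Function.iterate_succ_apply', hparts, Function.iterate_succ_apply]
    ring

open MeasureTheory in
lemma integral_sq_le_integral_add_sq_of_integral_mul_eq_zero {a b : ℝ} {f g : ℝ → ℝ} (hab : a ≤ b)
    (hf : ContinuousOn f (Set.Icc a b)) (hg : ContinuousOn g (Set.Icc a b))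
    (horth : ∫ x in a..b, f x * g x = 0) :
    ∫ x in a..b, f x ^ 2 ≤ ∫ x in a..b, (f x + g x) ^ 2 := by
  have hff : IntervalIntegrable (fun x => f x ^ 2) volume a b :=
    (hf.pow 2).intervalIntegrable_of_Icc hab
  have hfg : IntervalIntegrable (fun x => 2 * (f x * g x)) volume a b :=
    ((hf.mul hg).intervalIntegrable_of_Icc hab).const_mul 2
  have hgg : IntervalIntegrable (fun x => g x ^ 2) volume a b :=
    (hg.pow 2).intervalIntegrable_of_Icc hab
  calc ∫ x in a..b, f x ^ 2
      ≤ (∫ x in a..b, f x ^ 2) + ∫ x in a..b, g x ^ 2 :=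
        le_add_of_nonneg_right (intervalIntegral.integral_nonneg hab fun x _ => sq_nonneg (g x))
    _ = ∫ x in a..b, (f x ^ 2 + 2 * (f x * g x)) + g x ^ 2 := by
        rw [intervalIntegral.integral_add (hff.add hfg) hgg,
          intervalIntegral.integral_add hff hfg, intervalIntegral.integral_const_mul, horth,
          mul_zero, add_zero]
    _ = ∫ x in a..b, (f x + g x) ^ 2 := by
        congr 1 with x
        ring

section PowersOfXSqSubOne

variable {R : Type*} [CommRing R]

lemma X_sq_sub_one_mul_derivative_pow (n : ℕ) :
    ((X : R[X]) ^ 2 - 1) * derivative ((X ^ 2 - 1) ^ n) = 2 * (n : R[X]) * X * (X ^ 2 - 1) ^ n := by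
  cases n with
  | zero => simp
  | succ n =>
    simp only [derivative_pow_succ, derivative_sub, derivative_X, derivative_one, C_add, C_1,
      map_natCast, Nat.cast_add_one]
    ring

lemma X_sq_sub_one_mul_iterate_derivative_pow (n k : ℕ) :
    ((X : R[X]) ^ 2 - 1) * derivative^[k + 2] ((X ^ 2 - 1) ^ n) =
      2 * ((n : R[X]) - ((k : R[X]) + 1)) * X * derivative^[k + 1] ((X ^ 2 - 1) ^ n) +
        ((k : R[X]) + 1) * (2 * (n : R[X]) - (k : R[X])) * derivative^[k] ((X ^ 2 - 1) ^ n) := by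
  induction k with
  | zero =>
    have h := congrArg derivative (X_sq_sub_one_mul_derivative_pow (R := R) n)
    simp only [derivative_mul, derivative_sub, derivative_X_sq, derivative_one, derivative_natCast,
      derivative_ofNat, derivative_X, map_ofNat] at h
    simp only [Function.iterate_succ_apply', Function.iterate_zero, id, Nat.cast_zero]
    linear_combination h
  | succ k ih =>
    have h := congrArg derivative ih
    simp only [derivative_mul, derivative_add, derivative_sub, derivative_X_sq, derivative_one,
      derivative_natCast, derivative_ofNat, derivative_X, map_ofNat,
      ← Function.iterate_succ_apply' derivative] at h
    push_cast
    linear_combination h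

lemma isRoot_iterate_derivative_X_sq_sub_one_pow {n j : ℕ} (hj : j < n) {x : R} (hx : x ^ 2 = 1) :
    (derivative^[j] (((X : R[X]) ^ 2 - 1) ^ n)).IsRoot x := by
  obtain ⟨r, hr⟩ := pow_sub_dvd_iterate_derivative_pow ((X : R[X]) ^ 2 - 1) n j
  rw [hr, IsRoot, eval_mul, eval_pow, eval_sub, eval_pow, eval_X, eval_one, hx, sub_self,
    zero_pow (Nat.sub_ne_zero_of_lt hj), zero_mul]

lemma natDegree_X_sq_sub_one_pow [Nontrivial R] [NoZeroDivisors R] (n : ℕ) :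
    (((X : R[X]) ^ 2 - 1) ^ n).natDegree = n * 2 := by
  rw [natDegree_pow, ← C_1, natDegree_X_pow_sub_C]

lemma splits_X_sq_sub_one : ((X : R[X]) ^ 2 - 1).Splits := by
  have hfactor : (X : R[X]) ^ 2 - 1 = (X - C 1) * (X - C (-1)) := by
    rw [C_neg, C_1]
    ring
  exact hfactor ▸ (Splits.X_sub_C 1).mul (Splits.X_sub_C (-1))

end PowersOfXSqSubOne

lemma integral_mul_legendre_eq_zero {n : ℕ} {q : ℝ[X]} (hq : q.natDegree < n) :
    ∫ x in (-1 : ℝ)..1, q.eval x * (legendre n).eval x = 0 := by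
  have hparts := integral_mul_iterate_derivative (k := n) (f := (X ^ 2 - 1) ^ n)
    (fun j hj => isRoot_iterate_derivative_X_sq_sub_one_pow hj (x := -1) (by norm_num))
    (fun j hj => isRoot_iterate_derivative_X_sq_sub_one_pow hj (one_pow 2)) q
  rw [iterate_derivative_eq_zero hq] at hparts
  simp only [eval_zero, zero_mul, intervalIntegral.integral_zero, mul_zero] at hparts
  simp only [legendre, eval_mul, eval_C, mul_left_comm (q.eval _),
    intervalIntegral.integral_const_mul, hparts, mul_zero]

lemma lobattoChi_add_two (m : ℕ) :
    lobattoChi (m + 2) = C ((m + 1) * (m + 2) / (2 ^ (m + 1) * ((m + 1).factorial : ℝ))) *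
      derivative^[m] ((X ^ 2 - 1) ^ (m + 1)) := by
  have hode : ((X : ℝ[X]) ^ 2 - 1) * derivative^[m + 2] ((X ^ 2 - 1) ^ (m + 1)) =
      C ((m + 1) * (m + 2) : ℝ) * derivative^[m] ((X ^ 2 - 1) ^ (m + 1)) := by
    rw [X_sq_sub_one_mul_iterate_derivative_pow]
    simp only [C_mul, C_add, C_1, C_ofNat, map_natCast, Nat.cast_add_one]
    ring
  rw [lobattoChi, Nat.add_succ_sub_one, legendre, derivative_C_mul,
    ← Function.iterate_succ_apply' derivative, mul_assoc, mul_comm _ (X ^ 2 - 1), hode,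
    ← mul_assoc, ← C_mul, one_div_mul_eq_div]

lemma derivative_lobattoChi_add_two (m : ℕ) :
    derivative (lobattoChi (m + 2)) = C ((m + 1) * (m + 2) : ℝ) * legendre (m + 1) := by
  rw [lobattoChi_add_two, legendre, derivative_C_mul, ← Function.iterate_succ_apply' derivative,
    ← mul_assoc, ← C_mul, mul_one_div]

lemma natDegree_lobattoChi_add_two (m : ℕ) : (lobattoChi (m + 2)).natDegree = m + 2 := by
  rw [lobattoChi_add_two, natDegree_C_mul (by positivity), natDegree_iterate_derivative_eq,
    natDegree_X_sq_sub_one_pow]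
  omega

lemma splits_lobattoChi_add_two (m : ℕ) : (lobattoChi (m + 2)).Splits := by
  rw [lobattoChi_add_two]
  exact (splits_iterate_derivative (splits_X_sq_sub_one.pow (m + 1)) m).C_mul _

lemma nodup_roots_lobattoChi_add_two (m : ℕ) : (lobattoChi (m + 2)).roots.Nodup := by
  have hsep : ((X : ℝ[X]) ^ 2 - 1).Separable := X_pow_sub_one_separable_iff.2 (by norm_num)
  have hode : (X ^ 2 - 1) * derivative (derivative (lobattoChi (m + 2))) =
      lobattoChi (m + 2) * C ((m + 1) * (m + 2) : ℝ) := by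
    rw [derivative_lobattoChi_add_two, derivative_C_mul, lobattoChi, Nat.add_succ_sub_one]
    ring
  exact nodup_roots_of_dvd_separable_mul_derivative_derivative hsep ⟨_, hode⟩

lemma exists_eq_C_mul_lobattoChi {m : ℕ} {w : ℝ[X]} (hdeg : w.natDegree ≤ m + 2)
    (hroot : ∀ x, (lobattoChi (m + 2)).IsRoot x → w.IsRoot x) :
    ∃ a : ℝ, w = C a * lobattoChi (m + 2) := by
  have hne : lobattoChi (m + 2) ≠ 0 :=
    ne_zero_of_natDegree_gt (n := 0) (by rw [natDegree_lobattoChi_add_two]; omega)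
  have hdvd : lobattoChi (m + 2) ∣ w := dvd_of_splits_of_nodup_roots hne
    (splits_lobattoChi_add_two m) (nodup_roots_lobattoChi_add_two m) hroot
  exact exists_eq_C_mul_of_dvd_of_natDegree_le hdvd
    (hdeg.trans_eq (natDegree_lobattoChi_add_two m).symm)

/-- H¹-seminorm stability of Gauss–Lobatto interpolation: if `u` has degree at most
`p` and `v = I_{p−1}u` is the polynomial of degree at most `p − 1` agreeing with `u`
at the `p` Gauss–Lobatto nodes (the roots of `χ_p`), then
`∫_{−1}^{1} (v')² ≤ ∫_{−1}^{1} (u')²`. -/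
theorem gauss_lobatto_interp_h1_stability (p : ℕ) (hp : 2 ≤ p)
    (u v : Polynomial ℝ) (hu : u.natDegree ≤ p) (hv : v.natDegree ≤ p - 1)
    (hinterp : ∀ x : ℝ, (lobattoChi p).eval x = 0 → v.eval x = u.eval x) :
    ∫ x in (-1 : ℝ)..1, (Polynomial.derivative v).eval x ^ 2 ≤
      ∫ x in (-1 : ℝ)..1, (Polynomial.derivative u).eval x ^ 2 := by
  obtain ⟨m, rfl⟩ := Nat.exists_eq_add_of_le' hp
  obtain ⟨a, ha⟩ : ∃ a : ℝ, u - v = C a * lobattoChi (m + 2) :=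
    exists_eq_C_mul_lobattoChi ((natDegree_sub_le u v).trans (max_le hu (by omega)))
      fun x hx => by rw [IsRoot, eval_sub, hinterp x hx, sub_self]
  have hderiv : derivative u = derivative v + C (a * ((m + 1) * (m + 2))) * legendre (m + 1) := by
    rw [C_mul, mul_assoc, ← derivative_lobattoChi_add_two, ← derivative_C_mul, ← ha,
      ← derivative_add, add_sub_cancel]
  have hdeg : (derivative v).natDegree < m + 1 := by
    have := natDegree_derivative_le v
    omega
  have horth : ∫ x in (-1 : ℝ)..1, (derivative v).eval x *
      (C (a * ((m + 1) * (m + 2))) * legendre (m + 1)).eval x = 0 := by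
    simp only [eval_mul, eval_C, mul_left_comm ((derivative v).eval _),
      intervalIntegral.integral_const_mul, integral_mul_legendre_eq_zero hdeg, mul_zero]
  simp only [hderiv, eval_add]
  exact integral_sq_le_integral_add_sq_of_integral_mul_eq_zero (by norm_num)
    (Polynomial.continuousOn _) (Polynomial.continuousOn _) horth
end

section
/- Let p ≥ 2 be an integer. For every real polynomial u of degree at most p, the interpolation error u − I_{p−1}u is a scalar multiple of χ_p; explicitly, if u = Σ_{i=0}^{p} a_i P_i is the Legendre expansion of u, then u − I_{p−1}u = a_p ((2p−1)/(p² − p)) χ_p. -/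
open Polynomial

/-!
Applying Rolle's theorem repeatedly to `(x² - 1)ⁿ`, which vanishes to order `n` at `±1`, gives `n`
distinct zeros of `P_n` in `(-1, 1)`. One further application gives `n - 1` zeros of `P_n'` there,
and for `n = p - 1` these together with `±1` are `p` distinct zeros of `χ_p`. Since `χ_p` has
degree at most `p`, it is a constant multiple of the nodal polynomial `∏ (x - x_i)` of these
zeros, and so is the interpolation error `u - v`. The two constants are the coefficients of `x^p`,
which are compared using that `P_n` has leading coefficient `centralBinom n / 2ⁿ`.
-/

section Rolle

variable {a b : ℝ}

lemma exists_finset_deriv_eq_zero {f : ℝ → ℝ} {c : ℝ} {k : ℕ} {s : Finset ℝ}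
    (hf : ContinuousOn f (Set.Icc a b)) (hs : ↑s ⊆ Set.Icc a b) (hcard : s.card = k + 1)
    (hfs : ∀ x ∈ s, f x = c) :
    ∃ t : Finset ℝ, ↑t ⊆ Set.Ioo a b ∧ t.card = k ∧ ∀ x ∈ t, deriv f x = 0 := by
  let node := s.orderEmbOfFin hcard
  have node_mem (i : Fin (k + 1)) : node i ∈ s := s.orderEmbOfFin_mem hcard i
  have rolle (i : Fin k) : ∃ z ∈ Set.Ioo (node i.castSucc) (node i.succ), deriv f z = 0 :=
    exists_deriv_eq_zero (node.strictMono i.castSucc_lt_succ)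
      (hf.mono (Set.Icc_subset_Icc (hs (node_mem _)).1 (hs (node_mem _)).2))
      ((hfs _ (node_mem _)).trans (hfs _ (node_mem _)).symm)
  choose z hz hderiv using rolle
  have z_strictMono : StrictMono z := fun i j hij =>
    calc z i < node i.succ := (hz i).2
      _ ≤ node j.castSucc := node.monotone (Fin.succ_le_castSucc_iff.2 hij)
      _ < z j := (hz j).1
  refine ⟨Finset.univ.map ⟨z, z_strictMono.injective⟩, ?_, by simp, by simpa using hderiv⟩
  intro x hx
  obtain ⟨i, rfl⟩ : ∃ i, z i = x := by simpa using hx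
  exact ⟨(hs (node_mem _)).1.trans_lt (hz i).1, (hz i).2.trans_le (hs (node_mem _)).2⟩

lemma exists_finset_derivative_eval_eq_zero {f : ℝ[X]} {k : ℕ} {s : Finset ℝ}
    (hs : ↑s ⊆ Set.Icc a b) (hcard : s.card = k + 1) (hfs : ∀ x ∈ s, f.eval x = 0) :
    ∃ t : Finset ℝ, ↑t ⊆ Set.Ioo a b ∧ t.card = k ∧ ∀ x ∈ t, (derivative f).eval x = 0 := by
  simpa only [Polynomial.deriv] using
    exists_finset_deriv_eq_zero f.continuousOn hs hcard hfs

lemma card_insert_insert_of_subset_Ioo {α : Type*} [Preorder α] [DecidableEq α] {a b : α}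
    {s : Finset α} (hab : a < b) (hs : ↑s ⊆ Set.Ioo a b) :
    (insert a (insert b s)).card = s.card + 2 := by
  have ha : a ∉ s := fun h => (hs h).1.false
  have hb : b ∉ s := fun h => (hs h).2.false
  rw [Finset.card_insert_of_notMem (by simp [hab.ne, ha]), Finset.card_insert_of_notMem hb]

lemma eval_iterate_derivative_eq_zero_of_pow_dvd {R : Type*} [CommRing R] {f : R[X]} {x : R}
    {n k : ℕ} (hf : (X - C x) ^ n ∣ f) (hk : k < n) : (derivative^[k] f).eval x = 0 :=
  dvd_iff_isRoot.1 <| (dvd_pow_self _ (Nat.sub_ne_zero_of_lt hk)).trans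
    (pow_sub_dvd_iterate_derivative_of_pow_dvd k hf)

lemma exists_finset_iterate_derivative_eval_eq_zero {f : ℝ[X]} {n k : ℕ} (hab : a < b)
    (ha : (X - C a) ^ n ∣ f) (hb : (X - C b) ^ n ∣ f) (hk : k ≤ n) :
    ∃ s : Finset ℝ, ↑s ⊆ Set.Ioo a b ∧ s.card = k ∧
      ∀ x ∈ s, (derivative^[k] f).eval x = 0 := by
  induction k with
  | zero => exact ⟨∅, by simp, rfl, by simp⟩
  | succ k ih =>
    obtain ⟨s, hs, rfl, hroots⟩ := ih (by lia)
    rw [Function.iterate_succ_apply']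
    refine exists_finset_derivative_eval_eq_zero (s := insert a (insert b s)) ?_
      (card_insert_insert_of_subset_Ioo hab hs) ?_
    · simpa [Set.insert_subset_iff, hab.le] using hs.trans Set.Ioo_subset_Icc_self
    · simpa only [Finset.forall_mem_insert] using
        ⟨eval_iterate_derivative_eq_zero_of_pow_dvd ha hk,
          eval_iterate_derivative_eq_zero_of_pow_dvd hb hk, hroots⟩

end Rolle

lemma sub_eq_C_coeff_card_mul_nodal {R : Type*} [CommRing R] [IsDomain R] {s : Finset R}
    {f g : R[X]} (hf : f.natDegree ≤ s.card) (hg : g.degree < s.card)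
    (heval : ∀ x ∈ s, f.eval x = g.eval x) :
    f - g = C (f.coeff s.card) * Lagrange.nodal s id := by
  have natDegree_nodal : (Lagrange.nodal s (id : R → R)).natDegree = s.card :=
    Lagrange.natDegree_nodal
  refine eq_of_degree_sub_lt_of_eval_finset_eq s ?_ fun x hx => ?_
  · refine (degree_lt_iff_coeff_zero _ _).2 fun m hm => ?_
    have hgm : g.coeff m = 0 := (degree_lt_iff_coeff_zero _ _).1 hg m hm
    rw [coeff_sub, coeff_sub, coeff_C_mul, hgm, sub_zero]
    rcases hm.eq_or_lt with rfl | hm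
    · have nodal_coeff : (Lagrange.nodal s (id : R → R)).coeff s.card = 1 :=
        natDegree_nodal ▸ Lagrange.nodal_monic.coeff_natDegree
      rw [nodal_coeff, mul_one, sub_self]
    · rw [coeff_eq_zero_of_natDegree_lt (hf.trans_lt hm),
        coeff_eq_zero_of_natDegree_lt (natDegree_nodal.trans_lt hm), mul_zero, sub_zero]
  · have nodal_eval : (Lagrange.nodal s id).eval x = 0 := Lagrange.eval_nodal_at_node (v := id) hx
    rw [eval_sub, heval x hx, sub_self, eval_mul, nodal_eval, mul_zero]

lemma natDegree_X_sq_sub_one_le {R : Type*} [Ring R] : ((X : R[X]) ^ 2 - 1).natDegree ≤ 2 := by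
  compute_degree

lemma X_sq_sub_one_eq_mul {R : Type*} [CommRing R] :
    (X : R[X]) ^ 2 - 1 = (X - C (-1)) * (X - C 1) := by
  simp only [map_neg, map_one]
  ring

lemma natDegree_legendre_le (n : ℕ) : (legendre n).natDegree ≤ n :=
  calc (legendre n).natDegree
      ≤ ((X ^ 2 - 1 : ℝ[X]) ^ n).natDegree - n :=
        (natDegree_C_mul_le _ _).trans (natDegree_iterate_derivative _ _)
    _ ≤ n * 2 - n := Nat.sub_le_sub_right (natDegree_pow_le_of_le n natDegree_X_sq_sub_one_le) n
    _ = n := by lia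

lemma coeff_legendre_self (n : ℕ) : (legendre n).coeff n = n.centralBinom / 2 ^ n := by
  have coeff_pow : ((X ^ 2 - 1 : ℝ[X]) ^ n).coeff (n + n) = 1 := by
    rw [← mul_two, coeff_pow_of_natDegree_le natDegree_X_sq_sub_one_le]
    simp [coeff_one]
  rw [legendre, coeff_C_mul, coeff_iterate_derivative, coeff_pow,
    Nat.descFactorial_eq_factorial_mul_choose, ← two_mul, ← Nat.centralBinom_eq_two_mul_choose,
    nsmul_one, Nat.cast_mul]
  field_simp

lemma succ_mul_coeff_legendre_succ (n : ℕ) :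
    (n + 1) * (legendre (n + 1)).coeff (n + 1) = (2 * n + 1) * (legendre n).coeff n := by
  have centralBinom_succ :
      (n + 1) * ((n + 1).centralBinom : ℝ) = 2 * (2 * n + 1) * n.centralBinom :=
    mod_cast Nat.succ_mul_centralBinom_succ n
  rw [coeff_legendre_self, coeff_legendre_self, ← mul_div_assoc, centralBinom_succ, pow_succ]
  field_simp

lemma exists_finset_legendre_eval_eq_zero (n : ℕ) :
    ∃ s : Finset ℝ, ↑s ⊆ Set.Ioo (-1 : ℝ) 1 ∧ s.card = n ∧ ∀ x ∈ s, (legendre n).eval x = 0 := by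
  have hpow : (X ^ 2 - 1 : ℝ[X]) ^ n = (X - C (-1)) ^ n * (X - C 1) ^ n := by
    rw [X_sq_sub_one_eq_mul, mul_pow]
  obtain ⟨s, hs, hcard, hroots⟩ := exists_finset_iterate_derivative_eval_eq_zero
    (by norm_num : (-1 : ℝ) < 1) (Dvd.intro _ hpow.symm) (Dvd.intro_left _ hpow.symm) le_rfl
  exact ⟨s, hs, hcard, fun x hx => by rw [legendre, eval_mul, hroots x hx, mul_zero]⟩

lemma natDegree_sum_legendre_le (a : ℕ → ℝ) (n : ℕ) :
    (∑ i ∈ Finset.range (n + 1), C (a i) * legendre i).natDegree ≤ n :=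
  natDegree_sum_le_of_forall_le _ _ fun i hi =>
    (natDegree_C_mul_le _ _).trans <|
      (natDegree_legendre_le i).trans (Finset.mem_range_succ_iff.1 hi)

lemma coeff_sum_legendre (a : ℕ → ℝ) (n : ℕ) :
    (∑ i ∈ Finset.range (n + 1), C (a i) * legendre i).coeff n = a n * (legendre n).coeff n := by
  have coeff_lower (i : ℕ) (hi : i ∈ Finset.range n) : (C (a i) * legendre i).coeff n = 0 := by
    rw [coeff_C_mul, coeff_eq_zero_of_natDegree_lt
      ((natDegree_legendre_le i).trans_lt (Finset.mem_range.1 hi)), mul_zero]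
  rw [finsetSum_coeff, Finset.sum_range_succ, Finset.sum_eq_zero coeff_lower, zero_add,
    coeff_C_mul]

lemma natDegree_lobattoChi_le (p : ℕ) : (lobattoChi p).natDegree ≤ p := by
  rcases lt_or_ge p 2 with hp | hp
  · simp [lobattoChi, legendre, show p - 1 = 0 by lia]
  calc (lobattoChi p).natDegree
      ≤ (derivative (legendre (p - 1))).natDegree + 2 :=
        natDegree_mul_le_of_le le_rfl natDegree_X_sq_sub_one_le
    _ ≤ (p - 1 - 1) + 2 := by
        gcongr
        exact (natDegree_derivative_le _).trans (Nat.sub_le_sub_right (natDegree_legendre_le _) 1)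
    _ = p := by lia

lemma coeff_lobattoChi_succ (n : ℕ) :
    (lobattoChi (n + 1)).coeff (n + 1) = n * (legendre n).coeff n := by
  have legendre_coeff : (legendre n).coeff (n + 2) = 0 :=
    coeff_eq_zero_of_natDegree_lt ((natDegree_legendre_le n).trans_lt (by lia))
  rcases n with _ | n
  · simp [lobattoChi, legendre]
  · rw [lobattoChi, Nat.add_sub_cancel, mul_sub, mul_one, coeff_sub, coeff_mul_X_pow,
      coeff_derivative, coeff_derivative, legendre_coeff]
    push_cast
    ring

lemma coeff_legendre_eq_mul_coeff_lobattoChi {p : ℕ} (hp : 2 ≤ p) :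
    (legendre p).coeff p =
      (2 * (p : ℝ) - 1) / ((p : ℝ) ^ 2 - p) * (lobattoChi p).coeff p := by
  obtain ⟨n, rfl⟩ := Nat.exists_eq_add_of_le' hp
  have legendre_succ := succ_mul_coeff_legendre_succ (n + 1)
  have denom_eq : ((n : ℝ) + 2) ^ 2 - (n + 2) = (n + 1) * (n + 2) := by ring
  rw [coeff_lobattoChi_succ]
  push_cast at legendre_succ ⊢
  rw [denom_eq]
  field_simp
  linear_combination legendre_succ

lemma exists_finset_lobattoChi_eval_eq_zero {p : ℕ} (hp : 2 ≤ p) :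
    ∃ s : Finset ℝ, s.card = p ∧ ∀ x ∈ s, (lobattoChi p).eval x = 0 := by
  obtain ⟨s, hs, hcard, hroots⟩ := exists_finset_legendre_eval_eq_zero (p - 1)
  obtain ⟨t, ht, htcard, hcrit⟩ := exists_finset_derivative_eval_eq_zero (k := p - 2)
    (hs.trans Set.Ioo_subset_Icc_self) (by lia) hroots
  refine ⟨insert (-1) (insert 1 t), ?_, ?_⟩
  · rw [card_insert_insert_of_subset_Ioo (by norm_num) ht]
    lia
  · simp only [Finset.forall_mem_insert]
    exact ⟨by simp [lobattoChi], by simp [lobattoChi],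
      fun x hx => by rw [lobattoChi, eval_mul, hcrit x hx, zero_mul]⟩

/-- The Gauss–Lobatto interpolation error is a multiple of `χ_p`: if
`u = Σ_{i=0}^{p} a_i P_i` is the Legendre expansion of a polynomial of degree at
most `p`, and `v = I_{p−1}u` is the polynomial of degree at most `p − 1` agreeing
with `u` at the `p` Gauss–Lobatto nodes (the roots of `χ_p`), then
`u − v = a_p ((2p−1)/(p² − p)) χ_p`. -/
theorem gauss_lobatto_interp_error_eq (p : ℕ) (hp : 2 ≤ p)
    (a : ℕ → ℝ) (u v : Polynomial ℝ)
    (hu : u = ∑ i ∈ Finset.range (p + 1), Polynomial.C (a i) * legendre i)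
    (hv : v.natDegree ≤ p - 1)
    (hinterp : ∀ x : ℝ, (lobattoChi p).eval x = 0 → v.eval x = u.eval x) :
    u - v = Polynomial.C (a p * ((2 * (p : ℝ) - 1) / ((p : ℝ) ^ 2 - p))) * lobattoChi p := by
  obtain ⟨s, hcard, hroots⟩ := exists_finset_lobattoChi_eval_eq_zero hp
  have hu_natDegree : u.natDegree ≤ p := hu ▸ natDegree_sum_legendre_le a p
  have hu_coeff : u.coeff p = a p * (legendre p).coeff p := hu ▸ coeff_sum_legendre a p
  have hv_degree : v.degree < p :=
    degree_le_natDegree.trans_lt (by exact_mod_cast hv.trans_lt (by lia))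
  have error_eq : u - v = C (u.coeff p) * Lagrange.nodal s id := by
    subst hcard
    exact sub_eq_C_coeff_card_mul_nodal hu_natDegree hv_degree
      fun x hx => (hinterp x (hroots x hx)).symm
  have lobattoChi_eq : lobattoChi p = C ((lobattoChi p).coeff p) * Lagrange.nodal s id := by
    subst hcard
    simpa using sub_eq_C_coeff_card_mul_nodal (g := 0) (natDegree_lobattoChi_le _)
      (by simp) (by simpa using hroots)
  rw [error_eq, lobattoChi_eq, ← mul_assoc, ← C_mul, hu_coeff,
    coeff_legendre_eq_mul_coeff_lobattoChi hp, mul_assoc]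
end

section
/- Let p ≥ 1 be an integer. For every real polynomial u of degree at most p with Legendre expansion u = Σ_{i=0}^{p} a_i P_i, it holds that ∫_{−1}^{1} (u'(x))² dx ≥ (4p − 2) a_p². -/
open Polynomial

/-! The proof tests `u'` against `P_{p-1}`. For `i < p` the derivative `P_i'` has degree less than
`p - 1`, so it is orthogonal to `P_{p-1}`, while `∫ P_p' P_{p-1} = 2` by parts: `P_p` is orthogonal
to `P_{p-1}'`, and the boundary values are `P_n(±1) = (±1)ⁿ`. Hence `∫ u' P_{p-1} = 2 a_p`. Parts
also gives `(2n + 1) ∫ P_n² = P_n(1)² + P_n(-1)² = 2`, because `x P_n'` agrees with `n P_n` up to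
lower degree. Cauchy–Schwarz then yields `4 a_p² ≤ (2 / (2p - 1)) ∫ (u')²`. -/

/-- The `L²(a, b)` pairing `⟨f, g⟩ = ∫ₐᵇ f g` of real polynomials, as a bilinear form, so that
linearity and Cauchy–Schwarz are available. -/
noncomputable def l2Pairing (a b : ℝ) : LinearMap.BilinForm ℝ ℝ[X] :=
  LinearMap.mk₂ ℝ (fun f g => ∫ x in a..b, f.eval x * g.eval x)
    (fun f₁ f₂ g => by
      simp only [eval_add, add_mul]
      exact intervalIntegral.integral_add (Continuous.intervalIntegrable (by fun_prop) _ _)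
        (Continuous.intervalIntegrable (by fun_prop) _ _))
    (fun c f g => by simp [mul_assoc])
    (fun f g₁ g₂ => by
      simp only [eval_add, mul_add]
      exact intervalIntegral.integral_add (Continuous.intervalIntegrable (by fun_prop) _ _)
        (Continuous.intervalIntegrable (by fun_prop) _ _))
    (fun c f g => by simp [mul_left_comm])

section L2Pairing

variable {a b : ℝ}

lemma l2Pairing_apply (f g : ℝ[X]) :
    l2Pairing a b f g = ∫ x in a..b, f.eval x * g.eval x :=
  rfl

lemma l2Pairing_comm (f g : ℝ[X]) : l2Pairing a b f g = l2Pairing a b g f := by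
  simp only [l2Pairing_apply, mul_comm]

lemma l2Pairing_mul_left (f g h : ℝ[X]) :
    l2Pairing a b (f * g) h = l2Pairing a b g (f * h) := by
  simp only [l2Pairing_apply, eval_mul, mul_left_comm, mul_assoc]

lemma l2Pairing_self_nonneg (hab : a ≤ b) (f : ℝ[X]) : 0 ≤ l2Pairing a b f f :=
  intervalIntegral.integral_nonneg hab fun _ _ => mul_self_nonneg _

lemma sq_l2Pairing_le (hab : a ≤ b) (f g : ℝ[X]) :
    l2Pairing a b f g ^ 2 ≤ l2Pairing a b f f * l2Pairing a b g g :=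
  LinearMap.BilinForm.apply_sq_le_of_symm _ (l2Pairing_self_nonneg hab) ⟨l2Pairing_comm⟩ f g

lemma l2Pairing_derivative_left (f g : ℝ[X]) :
    l2Pairing a b (derivative f) g =
      f.eval b * g.eval b - f.eval a * g.eval a - l2Pairing a b f (derivative g) := by
  rw [l2Pairing_comm, l2Pairing_comm f, l2Pairing_apply, l2Pairing_apply,
    intervalIntegral.integral_mul_deriv_eq_deriv_mul (fun x _ => g.hasDerivAt x)
      (fun x _ => f.hasDerivAt x) ((derivative g).continuous.intervalIntegrable _ _)
      ((derivative f).continuous.intervalIntegrable _ _)]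
  ring

lemma l2Pairing_iterate_derivative_left {f : ℝ[X]} {k : ℕ}
    (ha : ∀ j < k, (derivative^[j] f).eval a = 0) (hb : ∀ j < k, (derivative^[j] f).eval b = 0)
    (g : ℝ[X]) :
    l2Pairing a b (derivative^[k] f) g = (-1) ^ k * l2Pairing a b f (derivative^[k] g) := by
  induction k generalizing g with
  | zero => simp
  | succ k ih =>
    rw [Function.iterate_succ_apply', l2Pairing_derivative_left, ha k k.lt_succ_self,
      hb k k.lt_succ_self, ih (fun j hj => ha j (hj.trans k.lt_succ_self))
        (fun j hj => hb j (hj.trans k.lt_succ_self)), Function.iterate_succ_apply]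
    ring

lemma two_mul_l2Pairing_X_mul_derivative_add (f : ℝ[X]) :
    2 * l2Pairing a b (X * derivative f) f + l2Pairing a b f f =
      b * f.eval b ^ 2 - a * f.eval a ^ 2 := by
  have by_parts := l2Pairing_derivative_left (a := a) (b := b) (X * f) f
  have move_X : l2Pairing a b (X * f) (derivative f) = l2Pairing a b (X * derivative f) f := by
    rw [l2Pairing_mul_left, l2Pairing_comm]
  simp only [derivative_mul, derivative_X, one_mul, map_add, LinearMap.add_apply, eval_mul, eval_X,
    move_X] at by_parts
  linear_combination by_parts

end L2Pairing

lemma coeff_X_mul_derivative {R : Type*} [Semiring R] (f : R[X]) (m : ℕ) :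
    (X * derivative f).coeff m = m * f.coeff m := by
  cases m with
  | zero => simp
  | succ k => rw [coeff_X_mul, coeff_derivative, ← Nat.cast_succ, Nat.cast_comm]

lemma degree_X_mul_derivative_sub_lt {R : Type*} [Ring R] {f : R[X]} {n : ℕ} (hf : f.degree ≤ n) :
    (X * derivative f - n • f).degree < (n : WithBot ℕ) := by
  rw [degree_lt_iff_coeff_zero]
  intro m hm
  rw [coeff_sub, coeff_X_mul_derivative, coeff_smul, nsmul_eq_mul]
  rcases hm.eq_or_lt with rfl | hnm
  · exact sub_self _
  · simp [coeff_eq_zero_of_degree_lt (hf.trans_lt (by exact_mod_cast hnm))]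

lemma degree_derivative_lt_of_degree_le {R : Type*} [Semiring R] {f : R[X]} {n : ℕ}
    (hf : f.degree ≤ n) : (derivative f).degree < n := by
  rcases eq_or_ne f 0 with rfl | hf0
  · simp
  · exact (degree_derivative_lt hf0).trans_le hf

lemma degree_legendre_le (n : ℕ) : (legendre n).degree ≤ n := by
  have h_natDegree : ((X ^ 2 - 1 : ℝ[X]) ^ n).natDegree ≤ n * 2 :=
    natDegree_pow_le_of_le n (by compute_degree)
  refine degree_le_of_natDegree_le ((natDegree_C_mul_le _ _).trans
    ((natDegree_iterate_derivative _ _).trans ?_))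
  omega

lemma X_sq_sub_one_pow_eq_mul {R : Type*} [CommRing R] {r : R} (hr : r ^ 2 = 1) (n : ℕ) :
    (X ^ 2 - 1 : R[X]) ^ n = (X - C r) ^ n * (X + C r) ^ n := by
  rw [← mul_pow, ← map_one C, ← hr, map_pow]
  ring

lemma eval_iterate_derivative_X_sq_sub_one_pow_eq_zero {R : Type*} [CommRing R] {r : R}
    (hr : r ^ 2 = 1) {k n : ℕ} (hk : k < n) :
    (derivative^[k] ((X ^ 2 - 1 : R[X]) ^ n)).eval r = 0 :=
  aeval_iterate_derivative_of_lt _ n r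
    (by rw [Algebra.algebraMap_self, map_id, X_sq_sub_one_pow_eq_mul hr]) hk

lemma eval_iterate_derivative_X_sq_sub_one_pow_self {R : Type*} [CommRing R] {r : R}
    (hr : r ^ 2 = 1) (n : ℕ) :
    (derivative^[n] ((X ^ 2 - 1 : R[X]) ^ n)).eval r = n.factorial * (2 * r) ^ n := by
  have h := aeval_iterate_derivative_self ((X ^ 2 - 1 : R[X]) ^ n) n r (p' := (X + C r) ^ n)
    (by rw [Algebra.algebraMap_self, map_id, X_sq_sub_one_pow_eq_mul hr])
  simpa [two_mul] using h

lemma eval_legendre_of_sq_eq_one {r : ℝ} (hr : r ^ 2 = 1) (n : ℕ) :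
    (legendre n).eval r = r ^ n := by
  rw [legendre, eval_mul, eval_C, eval_iterate_derivative_X_sq_sub_one_pow_self hr, mul_pow]
  field_simp

lemma l2Pairing_legendre_eq_zero_of_degree_lt {n : ℕ} {q : ℝ[X]} (hq : q.degree < n) :
    l2Pairing (-1) 1 (legendre n) q = 0 := by
  rw [legendre, ← smul_eq_C_mul, map_smul, LinearMap.smul_apply, l2Pairing_iterate_derivative_left,
    iterate_derivative_eq_zero_of_degree_lt hq, map_zero, mul_zero, smul_zero]
  all_goals
    exact fun j hj => eval_iterate_derivative_X_sq_sub_one_pow_eq_zero (by norm_num) hj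

lemma l2Pairing_legendre_self (n : ℕ) :
    l2Pairing (-1) 1 (legendre n) (legendre n) = 2 / (2 * n + 1) := by
  have h_euler : l2Pairing (-1) 1 (X * derivative (legendre n)) (legendre n) =
      n * l2Pairing (-1) 1 (legendre n) (legendre n) := by
    have h_orth := l2Pairing_legendre_eq_zero_of_degree_lt
      (degree_X_mul_derivative_sub_lt (degree_legendre_le n))
    rw [map_sub, map_nsmul, sub_eq_zero, nsmul_eq_mul] at h_orth
    rw [l2Pairing_comm, h_orth]
  have h_endpoint {r : ℝ} (hr : r ^ 2 = 1) : (legendre n).eval r ^ 2 = 1 := by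
    rw [eval_legendre_of_sq_eq_one hr, pow_right_comm, hr, one_pow]
  have h_boundary := two_mul_l2Pairing_X_mul_derivative_add (a := -1) (b := 1) (legendre n)
  rw [h_euler, h_endpoint (by norm_num), h_endpoint (by norm_num)] at h_boundary
  rw [eq_div_iff (by positivity)]
  linear_combination h_boundary

lemma l2Pairing_derivative_legendre_eq_zero_of_le {i n : ℕ} (hi : i ≤ n) :
    l2Pairing (-1) 1 (derivative (legendre i)) (legendre n) = 0 := by
  rw [l2Pairing_comm]
  exact l2Pairing_legendre_eq_zero_of_degree_lt <| degree_derivative_lt_of_degree_le <|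
    (degree_legendre_le i).trans (by exact_mod_cast hi)

lemma l2Pairing_derivative_legendre_succ (n : ℕ) :
    l2Pairing (-1) 1 (derivative (legendre (n + 1))) (legendre n) = 2 := by
  have h_swap : l2Pairing (-1) 1 (legendre (n + 1)) (derivative (legendre n)) = 0 := by
    rw [l2Pairing_comm, l2Pairing_derivative_legendre_eq_zero_of_le n.le_succ]
  rw [l2Pairing_derivative_left, h_swap]
  simp only [eval_legendre_of_sq_eq_one (r := 1) (by norm_num),
    eval_legendre_of_sq_eq_one (r := -1) (by norm_num), one_pow, ← pow_add]
  rw [Odd.neg_one_pow ⟨n, by ring⟩]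
  norm_num

lemma l2Pairing_derivative_sum_legendre (n : ℕ) (a : ℕ → ℝ) :
    l2Pairing (-1) 1 (derivative (∑ i ∈ Finset.range (n + 2), C (a i) * legendre i))
      (legendre n) = 2 * a (n + 1) := by
  have h_lower : ∀ i ∈ Finset.range (n + 1),
      a i * l2Pairing (-1) 1 (derivative (legendre i)) (legendre n) = 0 := fun i hi => by
    rw [l2Pairing_derivative_legendre_eq_zero_of_le (Finset.mem_range_succ_iff.mp hi), mul_zero]
  simp only [← smul_eq_C_mul, map_sum, map_smul, LinearMap.sum_apply,
    LinearMap.smul_apply, smul_eq_mul]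
  rw [Finset.sum_range_succ, Finset.sum_eq_zero h_lower, l2Pairing_derivative_legendre_succ]
  ring

/-- For `p ≥ 1` and `u = Σ_{i=0}^{p} a_i P_i` a polynomial of degree at most `p`
with Legendre coefficients `a_i`, it holds that
`∫_{−1}^{1} (u')² ≥ (4p − 2) a_p²`. -/
theorem h1_seminorm_sq_ge (p : ℕ) (hp : 1 ≤ p) (a : ℕ → ℝ) (u : Polynomial ℝ)
    (hu : u = ∑ i ∈ Finset.range (p + 1), Polynomial.C (a i) * legendre i) :
    (4 * (p : ℝ) - 2) * a p ^ 2 ≤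
      ∫ x in (-1 : ℝ)..1, (Polynomial.derivative u).eval x ^ 2 := by
  obtain ⟨n, rfl⟩ := Nat.exists_eq_add_of_le' hp
  have h_energy : ∫ x in (-1 : ℝ)..1, (derivative u).eval x ^ 2 =
      l2Pairing (-1) 1 (derivative u) (derivative u) := by
    simp only [l2Pairing_apply, sq]
  have h_test : l2Pairing (-1) 1 (derivative u) (legendre n) = 2 * a (n + 1) := by
    rw [hu, l2Pairing_derivative_sum_legendre]
  have cauchy_schwarz := sq_l2Pairing_le (by norm_num : (-1 : ℝ) ≤ 1) (derivative u) (legendre n)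
  rw [h_test, l2Pairing_legendre_self, ← h_energy, mul_div_assoc', le_div_iff₀ (by positivity)]
    at cauchy_schwarz
  push_cast
  linear_combination cauchy_schwarz / 2
end
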